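/- Let C be a connected strongly graded k-coalgebra such that Ext_C^{n,m}(k,k) = 0 for all n ≠ m (i.e., C is Koszul). Then C is quadratic. -/

import Mathlib

/-!
Injectivity of `Δ(m)` follows from strongness by induction (`iterRes_injective`), and coassociativity
puts its image inside `C̃_m` (`deltaIter_mem_insertK`). The content is the reverse inclusion. It
reduces (`ctilde_le`) to the following property `ExactAt n`: a tensor `y ∈ C₁ ⊗ C_{n+1}` such that
`(id ⊗ Δ_{1,n}) y` lies in `Im Δ_{1,1} ⊗ C_n` belongs to the image of `Δ_{1,n+1}`.

This property is proved by strong induction on `n` (`exactAt`). For `n = 0` it is counitality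
(`exactAt_zero`). For `n ≥ 1`, exactness in lower degrees lifts `(id ⊗ Δ_{a,r}) y`, where
`a + r = n + 1` and `r ≥ 1`, along `Δ_{1,a} ⊗ id` to a tensor `w_{a+1,r} ∈ C_{a+1} ⊗ C_r`
(`exists_component`), with `w_{1,n+1} = y`. Injectivity of the maps `Δ_{1,a}` together with
coassociativity gives `(Δ_{p,q} ⊗ id) w_{p+q,r} = (id ⊗ Δ_{q,r}) w_{p,q+r}` (`cocycle_component`),
so the sum of all the `w_{p,r}` is a `2`-cocycle of degree `n + 2` in the cobar complex. As
`Ext^{2,n+2} = 0`, it equals `Δ₊ x` for some `x ∈ C_{n+2}` (`exists_of_cocycle`), and comparing the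
components of bidegree `(1, n + 1)` yields `Δ_{1,n+1} x = y`. Only the groups `Ext^{2,m}` with
`m ≥ 3` enter.

Most computations take place in tensor powers of `C` itself, with `Δ_{p,q}` replaced by its
composite `delta` with the inclusion `C_p ⊗ C_q ⊆ C ⊗ C`. Statements about tensoring with an
auxiliary space are deduced by contracting with linear functionals (`mem_range_rTensor_of_slice`).
-/

open TensorProduct

noncomputable section
namespace Koszul

variable (k : Type) [Field k]

/-- Iterated tensor powers: `TP V 0 = k`, `TP V 1 = V`, `TP V (n+2) = V ⊗ TP V (n+1)`. -/
def TP (V : Type) [AddCommGroup V] [Module k V] : ℕ → ModuleCat k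
  | 0 => ModuleCat.of k k
  | 1 => ModuleCat.of k V
  | (n+2) => ModuleCat.of k (V ⊗[k] (TP V (n+1)))

variable (C : Type) [AddCommGroup C] [Module k C] [Coalgebra k C]
variable (𝒞 : ℕ → Submodule k C)

/-- The data exhibiting `C = ⊕ₙ Cₙ` as a connected graded coalgebra: a grouplike element `g`
spanning `C₀`, the counit vanishing in positive degrees, and the components
`Δc p q : C_{p+q} → C_p ⊗ C_q` of the comultiplication (extended by `0` to the other
homogeneous components of `C`). -/
structure GradedCoalgebraData where
  g : C
  Δc : ∀ p q : ℕ, C →ₗ[k] (↥(𝒞 p) ⊗[k] ↥(𝒞 q))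
  hC0 : 𝒞 0 = Submodule.span k {g}
  hgrp : Coalgebra.comul (R := k) g = g ⊗ₜ[k] g
  hcu : Coalgebra.counit (R := k) g = 1
  hcounit : ∀ n, 1 ≤ n → ∀ x ∈ 𝒞 n, Coalgebra.counit (R := k) x = 0
  hΔc : ∀ n, ∀ x ∈ 𝒞 n, Coalgebra.comul (R := k) x =
    ∑ p ∈ Finset.range (n+1),
      (TensorProduct.map (𝒞 p).subtype (𝒞 (n-p)).subtype) (Δc p (n-p) x)
  hΔc0 : ∀ p q n, n ≠ p + q → ∀ x ∈ 𝒞 n, Δc p q x = 0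

/-- `C` is strongly graded: every component `Δ_{p,q} : C_{p+q} → C_p ⊗ C_q` is injective. -/
def GradedCoalgebraData.Strong (D : GradedCoalgebraData k C 𝒞) : Prop :=
  ∀ p q : ℕ, ∀ x ∈ 𝒞 (p + q), D.Δc p q x = 0 → x = 0

/-- `Δ₊ : x ↦ Δ(x) - g ⊗ x - x ⊗ g`, the reduced comultiplication; on a homogeneous element
of positive degree `n` it equals the sum of the components `Δ_{p,q}` with `p, q ≥ 1`. -/
def deltaPlus (g : C) : C →ₗ[k] C ⊗[k] C :=
  Coalgebra.comul - (TensorProduct.mk k C C g) - ((TensorProduct.mk k C C).flip g)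

/-- `expand Δp n i` applies `Δp` to the `(i+1)`-st tensor factor of `C^{⊗(n+1)}`. -/
def expand (Δp : C →ₗ[k] C ⊗[k] C) : (n i : ℕ) → (↥(TP k C (n+1)) →ₗ[k] ↥(TP k C (n+2)))
  | 0, 0 => Δp
  | 0, (_+1) => 0
  | (n+1), 0 => (TensorProduct.assoc k C C ↥(TP k C (n+1))).toLinearMap.comp
      (LinearMap.rTensor ↥(TP k C (n+1)) Δp)
  | (n+1), (i+1) => LinearMap.lTensor C (expand Δp n i)

/-- The differential `dⁿ = Σ_{i=1}^{n} (-1)^{i-1} id ⊗ ⋯ ⊗ Δ₊ ⊗ ⋯ ⊗ id` of the normalized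
cobar complex (with `d⁰ = 0`). -/
def cobarD (Δp : C →ₗ[k] C ⊗[k] C) : (n : ℕ) → (↥(TP k C n) →ₗ[k] ↥(TP k C (n+1)))
  | 0 => 0
  | (n+1) => ∑ i ∈ Finset.range (n+1), ((-1:k)^i) • expand k C Δp n i

/-- `omega 𝒱 n m = ⊕_{𝐦 ∈ 𝒫ₙ(m)} V_{m₁} ⊗ ⋯ ⊗ V_{mₙ}`: the span, inside the `n`-th tensor
power, of tensors of homogeneous elements of positive degrees summing to `m`. -/
def omega {V : Type} [AddCommGroup V] [Module k V] (𝒱 : ℕ → Submodule k V) :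
    (n m : ℕ) → Submodule k ↥(TP k V n)
  | 0, m => if m = 0 then ⊤ else ⊥
  | 1, m => if m = 0 then ⊥ else 𝒱 m
  | (n+2), m => ⨆ p ∈ Finset.Icc 1 m,
      LinearMap.range (TensorProduct.map (𝒱 p).subtype (omega 𝒱 (n+1) (m-p)).subtype)

/-- `Ext_C^{n,m}(k,k) = Ker dⁿ_m / Im dⁿ⁻¹_m`, computed from the degree-`m` part of the
normalized cobar complex of `C` (for `n = 0` there is nothing to quotient by). -/
abbrev ExtGrp (Δp : C →ₗ[k] C ⊗[k] C) : (n m : ℕ) → Type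
  | 0, m => ↥(LinearMap.ker (cobarD k C Δp 0) ⊓ omega k 𝒞 0 m)
  | (n+1), m =>
      ↥(LinearMap.ker (cobarD k C Δp (n+1)) ⊓ omega k 𝒞 (n+1) m) ⧸
        (Submodule.comap (LinearMap.ker (cobarD k C Δp (n+1)) ⊓ omega k 𝒞 (n+1) m).subtype
          (Submodule.map (cobarD k C Δp n) (omega k 𝒞 n m)))

/-- The subspace `V^{⊗i} ⊗ K ⊗ V^{⊗(n-i)}` of `V^{⊗(n+2)}` (the subspace `K ⊆ V ⊗ V`
inserted at the `(i+1)`-st position). -/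
def insertK {V : Type} [AddCommGroup V] [Module k V] (K : Submodule k (V ⊗[k] V)) :
    (n i : ℕ) → Submodule k ↥(TP k V (n+2))
  | 0, 0 => K
  | 0, (_+1) => ⊥
  | (n+1), 0 => Submodule.map (TensorProduct.assoc k V V ↥(TP k V (n+1))).toLinearMap
      (LinearMap.range (TensorProduct.map K.subtype (LinearMap.id (M := ↥(TP k V (n+1))))))
  | (n+1), (i+1) =>
      LinearMap.range (TensorProduct.map (LinearMap.id (M := V)) (insertK K n i).subtype)

variable [DirectSum.Decomposition 𝒞]

/-- The iterated comultiplication `Δ(m) : Cₘ → C₁^{⊗m}`, with `Δ(1) = id` (realized on all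
of `C` via the projection onto `C₁`) and `Δ(m) = (id ⊗ Δ(m-1)) ∘ Δ_{1,m-1}`. -/
def deltaIter (D : GradedCoalgebraData k C 𝒞) : (m : ℕ) → (C →ₗ[k] ↥(TP k ↥(𝒞 1) m))
  | 0 => 0
  | 1 => (DirectSum.component k ℕ (fun i => ↥(𝒞 i)) 1).comp
      (DirectSum.decomposeLinearEquiv 𝒞).toLinearMap
  | (n+2) => (TensorProduct.map LinearMap.id ((deltaIter D (n+1)).comp (𝒞 (n+1)).subtype)).comp
      (D.Δc 1 (n+1))

/-- `C̃_m = ⋂_{p=1}^{m-1} C₁^{⊗(p-1)} ⊗ Im Δ_{1,1} ⊗ C₁^{⊗(m-p-1)}` for `m = j+2`. -/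
def Ctilde (D : GradedCoalgebraData k C 𝒞) (j : ℕ) : Submodule k ↥(TP k ↥(𝒞 1) (j+2)) :=
  ⨅ i ∈ Finset.range (j+1), insertK k (Submodule.map (D.Δc 1 1) (𝒞 2)) j i

/-- `C` is *quadratic*: for every `m = j+2 ≥ 2` the iterated comultiplication
`Δ(m) : Cₘ → C₁^{⊗m}` is injective with image `C̃_m`. -/
def CoalgQuadratic (D : GradedCoalgebraData k C 𝒞) : Prop :=
  ∀ j : ℕ, (∀ x ∈ 𝒞 (j+2), deltaIter k C 𝒞 D (j+2) x = 0 → x = 0) ∧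
    Submodule.map (deltaIter k C 𝒞 D (j+2)) (𝒞 (j+2)) = Ctilde k C 𝒞 D j

set_option linter.unusedSectionVars false

/-! ### Contractions of tensors with linear functionals -/

section Slices

variable {k}
variable {M N P W : Type} [AddCommGroup M] [Module k M] [AddCommGroup N] [Module k N]
  [AddCommGroup P] [Module k P] [AddCommGroup W] [Module k W]

/-- Contraction of the right tensor factor against a functional `φ`. -/
def sliceR (φ : W →ₗ[k] k) : M ⊗[k] W →ₗ[k] M :=
  (TensorProduct.rid k M).toLinearMap.comp (LinearMap.lTensor M φ)

/-- Contraction of the left tensor factor against a functional `φ`. -/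
def sliceL (φ : W →ₗ[k] k) : W ⊗[k] M →ₗ[k] M :=
  (TensorProduct.lid k M).toLinearMap.comp (LinearMap.rTensor M φ)

@[simp] lemma sliceR_tmul (φ : W →ₗ[k] k) (m : M) (w : W) :
    sliceR φ (m ⊗ₜ[k] w) = φ w • m := by simp [sliceR]

@[simp] lemma sliceL_tmul (φ : W →ₗ[k] k) (m : M) (w : W) :
    sliceL φ (w ⊗ₜ[k] m) = φ w • m := by simp [sliceL]

lemma sliceR_rTensor (φ : W →ₗ[k] k) (f : M →ₗ[k] N) (t : M ⊗[k] W) :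
    sliceR φ (LinearMap.rTensor W f t) = f (sliceR φ t) := by
  induction t with
  | zero => simp
  | tmul m w => simp
  | add a b ha hb => simp only [map_add, ha, hb]

lemma sliceL_lTensor (φ : W →ₗ[k] k) (f : M →ₗ[k] N) (t : W ⊗[k] M) :
    sliceL φ (LinearMap.lTensor W f t) = f (sliceL φ t) := by
  induction t with
  | zero => simp
  | tmul m w => simp
  | add a b ha hb => simp only [map_add, ha, hb]

/-- Over a field, a tensor lies in `A ⊗ W` as soon as all its contractions lie in `A`. -/
lemma mem_range_rTensor_of_slice (f : N →ₗ[k] M) (t : M ⊗[k] W)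
    (h : ∀ φ : W →ₗ[k] k, sliceR φ t ∈ LinearMap.range f) :
    t ∈ LinearMap.range (LinearMap.rTensor W f) := by
  classical
  let b := Module.Basis.ofVectorSpace k W
  have key : ∀ s : M ⊗[k] W, ∀ i,
      TensorProduct.equivFinsuppOfBasisRight b s i = sliceR (b.coord i) s := by
    intro s i
    induction s with
    | zero => simp
    | tmul m w => simp
    | add x y hx hy => simp only [map_add, Finsupp.add_apply, hx, hy]
  rw [← (TensorProduct.equivFinsuppOfBasisRight b).symm_apply_apply t,
    TensorProduct.equivFinsuppOfBasisRight_symm_apply]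
  refine Submodule.sum_mem _ fun i _ => ?_
  obtain ⟨n, hn⟩ := h (b.coord i)
  exact ⟨n ⊗ₜ b i, by simp [key, hn]⟩

/-- Left-handed version of `mem_range_rTensor_of_slice`. -/
lemma mem_range_lTensor_of_slice (f : N →ₗ[k] M) (t : W ⊗[k] M)
    (h : ∀ φ : W →ₗ[k] k, sliceL φ t ∈ LinearMap.range f) :
    t ∈ LinearMap.range (LinearMap.lTensor W f) := by
  have hs : ∀ φ : W →ₗ[k] k, ∀ s : W ⊗[k] M,
      sliceR φ (TensorProduct.comm k W M s) = sliceL φ s := by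
    intro φ s
    induction s with
    | zero => simp
    | tmul m w => simp
    | add x y hx hy => simp only [map_add, hx, hy]
  obtain ⟨u, hu⟩ := mem_range_rTensor_of_slice f (TensorProduct.comm k W M t)
    (fun φ => by rw [hs]; exact h φ)
  refine ⟨TensorProduct.comm k N W u, (TensorProduct.comm k W M).injective ?_⟩
  rw [← hu]
  clear hu
  induction u with
  | zero => simp
  | tmul m w => simp
  | add x y hx hy => simp only [map_add, hx, hy]

/-- A tensor all of whose right contractions vanish is zero. -/
lemma eq_zero_of_sliceR (t : M ⊗[k] W) (h : ∀ φ : W →ₗ[k] k, sliceR φ t = 0) : t = 0 := by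
  obtain ⟨u, hu⟩ := mem_range_rTensor_of_slice (0 : M →ₗ[k] M) t (fun φ => by simp [h φ])
  simpa using hu.symm

end Slices

/-! ### Graded components of the comultiplication -/

section Graded

/-- The projection of `C` onto its homogeneous component of degree `p`, as an endomorphism. -/
def proj (p : ℕ) : C →ₗ[k] C :=
  (𝒞 p).subtype.comp ((DirectSum.component k ℕ (fun i => ↥(𝒞 i)) p).comp
    (DirectSum.decomposeLinearEquiv 𝒞).toLinearMap)

lemma proj_apply (p : ℕ) (x : C) : proj k C 𝒞 p x = DirectSum.decompose 𝒞 x p := rfl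

lemma proj_mem (p : ℕ) (x : C) : proj k C 𝒞 p x ∈ 𝒞 p := by
  rw [proj_apply]; exact Subtype.coe_prop _

lemma proj_same {p : ℕ} {x : C} (hx : x ∈ 𝒞 p) : proj k C 𝒞 p x = x := by
  rw [proj_apply, DirectSum.decompose_of_mem_same _ hx]

lemma proj_ne {p n : ℕ} {x : C} (hx : x ∈ 𝒞 n) (h : n ≠ p) : proj k C 𝒞 p x = 0 := by
  rw [proj_apply, DirectSum.decompose_of_mem_ne _ hx h]

lemma proj_proj (p : ℕ) : (proj k C 𝒞 p).comp (proj k C 𝒞 p) = proj k C 𝒞 p :=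
  LinearMap.ext fun x => proj_same k C 𝒞 (proj_mem k C 𝒞 p x)

/-- Two linear maps on `C` agreeing on all homogeneous elements are equal. -/
lemma hom_ext {N : Type} [AddCommGroup N] [Module k N] {f f' : C →ₗ[k] N}
    (h : ∀ n, ∀ x ∈ 𝒞 n, f x = f' x) : f = f' :=
  LinearMap.ext fun x => DirectSum.Decomposition.inductionOn 𝒞 (by simp)
    (fun {i} m => h i m m.2) (fun a b ha hb => by simp only [map_add, ha, hb]) x

/-- The component `Δ_{p,q}` of the comultiplication, as a map `C → C ⊗ C`. -/
def delta (p q : ℕ) : C →ₗ[k] C ⊗[k] C :=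
  (TensorProduct.map (proj k C 𝒞 p) (proj k C 𝒞 q)).comp Coalgebra.comul

variable {k C 𝒞}

lemma map_proj_incl (p q a b : ℕ) (t : ↥(𝒞 a) ⊗[k] ↥(𝒞 b)) :
    TensorProduct.map (proj k C 𝒞 p) (proj k C 𝒞 q)
      (TensorProduct.map (𝒞 a).subtype (𝒞 b).subtype t) =
    if a = p ∧ b = q then TensorProduct.map (𝒞 a).subtype (𝒞 b).subtype t else 0 := by
  induction t with
  | zero => simp
  | add x y hx hy => simp only [map_add, hx, hy]; split_ifs <;> simp
  | tmul x y =>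
    by_cases h1 : a = p
    · by_cases h2 : b = q
      · subst h1 h2
        simp [proj_same k C 𝒞 x.2, proj_same k C 𝒞 y.2]
      · simp [proj_ne k C 𝒞 y.2 h2, h2]
    · simp [proj_ne k C 𝒞 x.2 h1, h1]

lemma delta_eq (D : GradedCoalgebraData k C 𝒞) (p q : ℕ) : delta k C 𝒞 p q =
    (TensorProduct.map (𝒞 p).subtype (𝒞 q).subtype).comp (D.Δc p q) := by
  refine hom_ext k C 𝒞 fun n x hx => ?_
  simp only [delta, LinearMap.comp_apply, D.hΔc n x hx, map_sum, map_proj_incl]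
  by_cases h : n = p + q
  · subst h
    rw [Finset.sum_eq_single p]
    · have : p + q - p = q := by omega
      rw [if_pos ⟨rfl, this⟩, this]
    · intro b _ hb
      rw [if_neg (fun h => hb h.1)]
    · intro hp; simp at hp
  · rw [D.hΔc0 p q n h x hx, map_zero]
    refine Finset.sum_eq_zero fun s hs => if_neg ?_
    simp at hs
    omega

/-- `Δ_{p,q}` is supported in degree `p + q`. -/
lemma delta_comp_proj (D : GradedCoalgebraData k C 𝒞) (p q : ℕ) :
    (delta k C 𝒞 p q).comp (proj k C 𝒞 (p + q)) = delta k C 𝒞 p q := by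
  refine hom_ext k C 𝒞 fun n x hx => ?_
  by_cases h : n = p + q
  · subst h
    simp [proj_same k C 𝒞 hx]
  · simp [proj_ne k C 𝒞 hx h, delta_eq D, D.hΔc0 p q n h x hx]

lemma map_proj_delta (p q : ℕ) :
    (TensorProduct.map (proj k C 𝒞 p) (proj k C 𝒞 q)).comp (delta k C 𝒞 p q) =
      delta k C 𝒞 p q := by
  rw [delta, ← LinearMap.comp_assoc, ← TensorProduct.map_comp, proj_proj, proj_proj]

lemma lTensor_proj_delta (p q : ℕ) :
    (LinearMap.lTensor C (proj k C 𝒞 q)).comp (delta k C 𝒞 p q) = delta k C 𝒞 p q := by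
  rw [delta, ← LinearMap.comp_assoc, LinearMap.lTensor_comp_map, proj_proj]

lemma rTensor_proj_delta (p q : ℕ) :
    (LinearMap.rTensor C (proj k C 𝒞 p)).comp (delta k C 𝒞 p q) = delta k C 𝒞 p q := by
  rw [delta, ← LinearMap.comp_assoc, LinearMap.rTensor_comp_map, proj_proj]

/-- Coassociativity of the graded components. -/
lemma delta_coassoc (D : GradedCoalgebraData k C 𝒞) (p q r : ℕ) :
    (TensorProduct.assoc k C C C).toLinearMap.comp
      ((LinearMap.rTensor C (delta k C 𝒞 p q)).comp (delta k C 𝒞 (p + q) r)) =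
    (LinearMap.lTensor C (delta k C 𝒞 q r)).comp (delta k C 𝒞 p (q + r)) := by
  have h1 : (LinearMap.rTensor C (delta k C 𝒞 p q)).comp (delta k C 𝒞 (p + q) r) =
      (TensorProduct.map (TensorProduct.map (proj k C 𝒞 p) (proj k C 𝒞 q)) (proj k C 𝒞 r)).comp
        ((LinearMap.rTensor C Coalgebra.comul).comp Coalgebra.comul) := by
    conv_lhs => rw [show delta k C 𝒞 (p + q) r = (TensorProduct.map _ _).comp _ from rfl]
    rw [← LinearMap.comp_assoc, LinearMap.rTensor_comp_map, delta_comp_proj D, delta,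
      ← LinearMap.comp_assoc, LinearMap.map_comp_rTensor]
  have h2 : (LinearMap.lTensor C (delta k C 𝒞 q r)).comp (delta k C 𝒞 p (q + r)) =
      (TensorProduct.map (proj k C 𝒞 p) (TensorProduct.map (proj k C 𝒞 q) (proj k C 𝒞 r))).comp
        ((LinearMap.lTensor C Coalgebra.comul).comp Coalgebra.comul) := by
    conv_lhs => rw [show delta k C 𝒞 p (q + r) = (TensorProduct.map _ _).comp _ from rfl]
    rw [← LinearMap.comp_assoc, LinearMap.lTensor_comp_map, delta_comp_proj D, delta,
      ← LinearMap.comp_assoc, LinearMap.map_comp_lTensor]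
  rw [h1, h2, ← Coalgebra.coassoc, ← LinearMap.comp_assoc,
    ← TensorProduct.map_map_comp_assoc_eq, LinearMap.comp_assoc]

lemma delta_coassoc_apply (D : GradedCoalgebraData k C 𝒞) (p q r : ℕ) (x : C) :
    TensorProduct.assoc k C C C
      (LinearMap.rTensor C (delta k C 𝒞 p q) (delta k C 𝒞 (p + q) r x)) =
    LinearMap.lTensor C (delta k C 𝒞 q r) (delta k C 𝒞 p (q + r) x) :=
  LinearMap.congr_fun (delta_coassoc D p q r) x

lemma lTensor_sliceR_assoc {M N W : Type} [AddCommGroup M] [Module k M] [AddCommGroup N]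
    [Module k N] [AddCommGroup W] [Module k W] (φ : W →ₗ[k] k) (t : (M ⊗[k] N) ⊗[k] W) :
    LinearMap.lTensor M (sliceR φ) (TensorProduct.assoc k M N W t) = sliceR φ t := by
  have : (LinearMap.lTensor M (sliceR φ)).comp (TensorProduct.assoc k M N W).toLinearMap =
      sliceR φ := by
    ext m n w
    simp
  exact LinearMap.congr_fun this t

/-- Coassociativity after contracting the third tensor factor. -/
lemma delta_slice (D : GradedCoalgebraData k C 𝒞) (p q r : ℕ) (φ : C →ₗ[k] k) :
    (delta k C 𝒞 p q).comp ((sliceR φ).comp (delta k C 𝒞 (p + q) r)) =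
    (LinearMap.lTensor C ((sliceR φ).comp (delta k C 𝒞 q r))).comp (delta k C 𝒞 p (q + r)) := by
  ext x
  simp only [LinearMap.comp_apply, LinearMap.lTensor_comp]
  rw [← delta_coassoc_apply D, lTensor_sliceR_assoc, sliceR_rTensor]

lemma proj_eq_zero_of_delta (D : GradedCoalgebraData k C 𝒞) (hs : D.Strong) {p q : ℕ} {x : C}
    (h : delta k C 𝒞 p q x = 0) : proj k C 𝒞 (p + q) x = 0 := by
  refine hs p q _ (proj_mem k C 𝒞 _ x) ?_
  rw [← delta_comp_proj D, delta_eq D] at h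
  refine TensorProduct.map_injective_of_flat_flat _ _ (𝒞 p).subtype_injective
    (𝒞 q).subtype_injective ?_
  rw [map_zero]
  exact h

/-- Injectivity of `Δ_{p,q} ⊗ id` on tensors whose left factor has degree `p + q`. -/
lemma rTensor_proj_eq_zero (D : GradedCoalgebraData k C 𝒞) (hs : D.Strong) {p q : ℕ}
    {W : Type} [AddCommGroup W] [Module k W] {t : C ⊗[k] W}
    (h : LinearMap.rTensor W (delta k C 𝒞 p q) t = 0) :
    LinearMap.rTensor W (proj k C 𝒞 (p + q)) t = 0 := by
  refine eq_zero_of_sliceR _ fun φ => ?_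
  rw [sliceR_rTensor]
  apply proj_eq_zero_of_delta D hs
  rw [← sliceR_rTensor, h, map_zero]

lemma g_mem (D : GradedCoalgebraData k C 𝒞) : D.g ∈ 𝒞 0 := by
  rw [D.hC0]; exact Submodule.mem_span_singleton_self _

lemma proj_zero_eq (D : GradedCoalgebraData k C 𝒞) :
    proj k C 𝒞 0 = (Coalgebra.counit (R := k) (A := C)).smulRight D.g := by
  refine hom_ext k C 𝒞 fun n x hx => ?_
  rcases Nat.eq_zero_or_pos n with rfl | hn
  · rw [proj_same k C 𝒞 hx]
    rw [D.hC0] at hx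
    obtain ⟨c, rfl⟩ := Submodule.mem_span_singleton.1 hx
    simp [D.hcu]
  · simp [proj_ne k C 𝒞 hx hn.ne', D.hcounit n hn x hx]

lemma delta_zero_left (D : GradedCoalgebraData k C 𝒞) (n : ℕ) (x : C) :
    delta k C 𝒞 0 n x = D.g ⊗ₜ[k] proj k C 𝒞 n x := by
  have h : TensorProduct.map (proj k C 𝒞 0) (proj k C 𝒞 n) =
      (TensorProduct.map (LinearMap.toSpanSingleton k C D.g) (proj k C 𝒞 n)).comp
        (LinearMap.rTensor C (Coalgebra.counit (R := k) (A := C))) := by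
    rw [proj_zero_eq D]; ext a b; simp
  rw [delta, h, LinearMap.comp_apply, LinearMap.comp_apply, Coalgebra.rTensor_counit_comul]
  simp

lemma delta_zero_right (D : GradedCoalgebraData k C 𝒞) (n : ℕ) (x : C) :
    delta k C 𝒞 n 0 x = proj k C 𝒞 n x ⊗ₜ[k] D.g := by
  have h : TensorProduct.map (proj k C 𝒞 n) (proj k C 𝒞 0) =
      (TensorProduct.map (proj k C 𝒞 n) (LinearMap.toSpanSingleton k C D.g)).comp
        (LinearMap.lTensor C (Coalgebra.counit (R := k) (A := C))) := by
    rw [proj_zero_eq D]; ext a b; simp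
  rw [delta, h, LinearMap.comp_apply, LinearMap.comp_apply, Coalgebra.lTensor_counit_comul]
  simp

/-- `Δ_{p,q}` for `p, q ≥ 1`, and `0` otherwise. -/
def deltaPos (p q : ℕ) : C →ₗ[k] C ⊗[k] C :=
  if 1 ≤ p ∧ 1 ≤ q then delta k C 𝒞 p q else 0

lemma comul_eq_sum (D : GradedCoalgebraData k C 𝒞) {n : ℕ} {x : C} (hx : x ∈ 𝒞 n) :
    Coalgebra.comul (R := k) x = ∑ a ∈ Finset.HasAntidiagonal.antidiagonal n, delta k C 𝒞 a.1 a.2 x := by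
  rw [D.hΔc n x hx, Finset.Nat.sum_antidiagonal_eq_sum_range_succ_mk]
  simp only [delta_eq D]
  rfl

lemma deltaPlus_eq_sum (D : GradedCoalgebraData k C 𝒞) {n : ℕ} (hn : 1 ≤ n) {x : C}
    (hx : x ∈ 𝒞 n) : deltaPlus k C D.g x =
      ∑ a ∈ Finset.HasAntidiagonal.antidiagonal n, deltaPos (𝒞 := 𝒞) (k := k) a.1 a.2 x := by
  obtain ⟨m, rfl⟩ : ∃ m, n = m + 1 := ⟨n - 1, by omega⟩
  have h := comul_eq_sum D hx
  have h0 : ∀ a ∈ Finset.HasAntidiagonal.antidiagonal (m + 1), delta k C 𝒞 a.1 a.2 x =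
      deltaPos (𝒞 := 𝒞) (k := k) a.1 a.2 x + ((if a = (0, m + 1) then D.g ⊗ₜ[k] x else 0) +
      (if a = (m + 1, 0) then x ⊗ₜ[k] D.g else 0)) := by
    rintro ⟨a, b⟩ hab
    simp only [Finset.HasAntidiagonal.mem_antidiagonal] at hab
    rcases Nat.eq_zero_or_pos a with rfl | ha
    · obtain rfl : b = m + 1 := by omega
      simp [deltaPos, delta_zero_left D, proj_same k C 𝒞 hx]
    · rcases Nat.eq_zero_or_pos b with rfl | hb
      · obtain rfl : a = m + 1 := by omega
        simp [deltaPos, delta_zero_right D, proj_same k C 𝒞 hx]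
      · rw [deltaPos, if_pos ⟨ha, hb⟩, if_neg (by simp; omega), if_neg (by simp; omega)]
        simp
  rw [Finset.sum_congr rfl h0, Finset.sum_add_distrib, Finset.sum_add_distrib,
    Finset.sum_ite_eq', Finset.sum_ite_eq', if_pos (by simp), if_pos (by simp)] at h
  simp only [deltaPlus, LinearMap.sub_apply, h, TensorProduct.mk_apply, LinearMap.flip_apply]
  abel

/-! ### Exactness at `C₁ ⊗ C_{n+1}` -/

lemma of_map_proj_eq {p q : ℕ} {t : C ⊗[k] C}
    (h : TensorProduct.map (proj k C 𝒞 p) (proj k C 𝒞 q) t = t) :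
    LinearMap.rTensor C (proj k C 𝒞 p) t = t ∧ LinearMap.lTensor C (proj k C 𝒞 q) t = t := by
  constructor
  · conv_lhs => rw [← h]
    rw [← LinearMap.comp_apply, LinearMap.rTensor_comp_map, proj_proj, h]
  · conv_lhs => rw [← h]
    rw [← LinearMap.comp_apply, LinearMap.lTensor_comp_map, proj_proj, h]

variable (k C 𝒞) in
/-- Exactness of
`C_{n+2} → C₁ ⊗ C_{n+1} → (C₁ ⊗ C₁ ⊗ C_n) / (Im Δ_{1,1} ⊗ C_n)` at the middle term. -/
def ExactAt (n : ℕ) : Prop :=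
  ∀ y z : C ⊗[k] C, TensorProduct.map (proj k C 𝒞 1) (proj k C 𝒞 (n + 1)) y = y →
    LinearMap.lTensor C (delta k C 𝒞 1 n) y =
      TensorProduct.assoc k C C C (LinearMap.rTensor C (delta k C 𝒞 1 1) z) →
    ∃ x, delta k C 𝒞 1 (n + 1) x = y

/-- In degree two exactness follows from counitality alone. -/
lemma exactAt_zero (D : GradedCoalgebraData k C 𝒞) : ExactAt k C 𝒞 0 := by
  intro y z hy h
  refine ⟨sliceR (Coalgebra.counit (R := k) (A := C)) z, ?_⟩
  rw [← sliceR_rTensor, ← lTensor_sliceR_assoc, ← h, ← LinearMap.comp_apply,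
    ← LinearMap.lTensor_comp]
  have : (sliceR (Coalgebra.counit (R := k) (A := C))).comp (delta k C 𝒞 1 0) =
      proj k C 𝒞 1 := by
    ext x
    simp [delta_zero_right D, D.hcu]
  rw [this]
  exact (of_map_proj_eq hy).2

/-- `(δ ⊗ id)(id ⊗ σ) = (id ⊗ id ⊗ σ)(δ ⊗ id)`, with the associator inserted. -/
lemma assoc_rTensor_lTensor (δ : C →ₗ[k] C ⊗[k] C) (σ : C →ₗ[k] C) (t : C ⊗[k] C) :
    TensorProduct.assoc k C C C (LinearMap.rTensor C δ (LinearMap.lTensor C σ t)) =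
      LinearMap.lTensor C (LinearMap.lTensor C σ)
        (TensorProduct.assoc k C C C (LinearMap.rTensor C δ t)) := by
  have h : ∀ u : (C ⊗[k] C) ⊗[k] C, TensorProduct.assoc k C C C (LinearMap.lTensor _ σ u) =
      LinearMap.lTensor C (LinearMap.lTensor C σ) (TensorProduct.assoc k C C C u) := by
    intro u
    have : (TensorProduct.assoc k C C C).toLinearMap.comp (LinearMap.lTensor _ σ) =
      (LinearMap.lTensor C (LinearMap.lTensor C σ)).comp
        (TensorProduct.assoc k C C C).toLinearMap := by
      ext a b c; simp
    exact LinearMap.congr_fun this u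
  rw [← h]
  congr 1
  rw [← LinearMap.comp_apply, ← LinearMap.comp_apply, LinearMap.rTensor_comp_lTensor,
    LinearMap.lTensor_comp_rTensor]

/-- Given exactness in lower degrees, a tensor `y ∈ C₁ ⊗ C_{n+1}` satisfying the quadratic
relation extends to components `w ∈ C_{1+a} ⊗ C_r` with `a + r = n + 1` and `r ≥ 1`: the tensor
`(id ⊗ Δ_{a,r}) y` lifts along `Δ_{1,a} ⊗ id`. -/
lemma exists_component (D : GradedCoalgebraData k C 𝒞) {n : ℕ}
    (ih : ∀ n' < n, ExactAt k C 𝒞 n') {y z : C ⊗[k] C}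
    (hy : TensorProduct.map (proj k C 𝒞 1) (proj k C 𝒞 (n + 1)) y = y)
    (hyz : LinearMap.lTensor C (delta k C 𝒞 1 n) y =
      TensorProduct.assoc k C C C (LinearMap.rTensor C (delta k C 𝒞 1 1) z))
    (a r : ℕ) (har : a + r = n + 1) (hr : 1 ≤ r) :
    ∃ w, TensorProduct.map (proj k C 𝒞 (1 + a)) (proj k C 𝒞 r) w = w ∧
      TensorProduct.assoc k C C C (LinearMap.rTensor C (delta k C 𝒞 1 a) w) =
        LinearMap.lTensor C (delta k C 𝒞 a r) y ∧ (a = 0 → w = y) := by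
  rcases a with _ | b
  · obtain rfl : r = n + 1 := by omega
    refine ⟨y, by simpa using hy, ?_, fun _ => rfl⟩
    rw [← hy, ← LinearEquiv.coe_coe, ← LinearMap.comp_apply, ← LinearMap.comp_apply,
      ← LinearMap.comp_apply]
    congr 1
    ext u v
    simp [delta_zero_left D, delta_zero_right D, proj_same k C 𝒞 (proj_mem k C 𝒞 _ _)]
  · obtain rfl : n = b + r := by omega
    -- The lift exists because all contractions of the third factor lift, by exactness at `b`.
    have hmem : (TensorProduct.assoc k C C C).symm (LinearMap.lTensor C (delta k C 𝒞 (b + 1) r) y) ∈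
        LinearMap.range (LinearMap.rTensor C (delta k C 𝒞 1 (b + 1))) := by
      refine mem_range_rTensor_of_slice _ _ fun φ => ?_
      rw [← lTensor_sliceR_assoc, LinearEquiv.apply_symm_apply, ← LinearMap.comp_apply,
        ← LinearMap.lTensor_comp]
      refine ih b (by omega) _
        (LinearMap.lTensor C ((sliceR φ).comp (delta k C 𝒞 b r)) z) ?_ ?_
      · rw [← LinearMap.comp_apply, LinearMap.map_comp_lTensor]
        conv_lhs => rw [← hy]
        conv_rhs => rw [← hy]
        rw [← LinearMap.comp_apply, ← LinearMap.comp_apply, LinearMap.lTensor_comp_map,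
          ← TensorProduct.map_comp, proj_proj]
        congr 2
        ext x
        simp only [LinearMap.comp_apply]
        rw [← sliceR_rTensor, ← LinearMap.comp_apply (LinearMap.rTensor C _), rTensor_proj_delta]
      · rw [assoc_rTensor_lTensor, ← hyz, ← LinearMap.comp_apply, ← LinearMap.comp_apply,
          ← LinearMap.lTensor_comp, ← LinearMap.lTensor_comp, ← delta_slice D, Nat.add_comm 1 b]
    obtain ⟨w, hw⟩ := hmem
    rw [LinearEquiv.eq_symm_apply] at hw
    refine ⟨TensorProduct.map (proj k C 𝒞 (1 + (b + 1))) (proj k C 𝒞 r) w, ?_, ?_, by simp⟩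
    · rw [← LinearMap.comp_apply, ← TensorProduct.map_comp, proj_proj, proj_proj]
    · have h1 : LinearMap.rTensor C (delta k C 𝒞 1 (b + 1))
          (TensorProduct.map (proj k C 𝒞 (1 + (b + 1))) (proj k C 𝒞 r) w) =
          LinearMap.rTensor C (delta k C 𝒞 1 (b + 1)) (LinearMap.lTensor C (proj k C 𝒞 r) w) := by
        rw [← LinearMap.comp_apply, LinearMap.rTensor_comp_map, delta_comp_proj D,
          ← LinearMap.comp_apply, LinearMap.rTensor_comp_lTensor]
      rw [h1, assoc_rTensor_lTensor]
      erw [hw]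
      rw [← LinearMap.comp_apply, ← LinearMap.lTensor_comp, lTensor_proj_delta]

/-- The components produced by `exists_component` satisfy the cocycle condition. -/
lemma cocycle_component (D : GradedCoalgebraData k C 𝒞) (hs : D.Strong) {y w w' : C ⊗[k] C}
    {a q r : ℕ}
    (hw : TensorProduct.map (proj k C 𝒞 (1 + a)) (proj k C 𝒞 (q + r)) w = w)
    (hwy : TensorProduct.assoc k C C C (LinearMap.rTensor C (delta k C 𝒞 1 a) w) =
        LinearMap.lTensor C (delta k C 𝒞 a (q + r)) y)
    (hwy' : TensorProduct.assoc k C C C (LinearMap.rTensor C (delta k C 𝒞 1 (a + q)) w') =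
        LinearMap.lTensor C (delta k C 𝒞 (a + q) r) y) :
    TensorProduct.assoc k C C C (LinearMap.rTensor C (delta k C 𝒞 (1 + a) q) w') =
      LinearMap.lTensor C (delta k C 𝒞 q r) w := by
  rw [← LinearEquiv.eq_symm_apply, ← sub_eq_zero]
  refine eq_zero_of_sliceR _ fun φ => ?_
  rw [map_sub, sliceR_rTensor, ← lTensor_sliceR_assoc (t := (TensorProduct.assoc k C C C).symm _),
    LinearEquiv.apply_symm_apply, ← LinearMap.lTensor_comp_apply]
  have hfix : LinearMap.rTensor C (proj k C 𝒞 (1 + a))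
      (delta k C 𝒞 (1 + a) q (sliceR φ w') -
        LinearMap.lTensor C ((sliceR φ).comp (delta k C 𝒞 q r)) w) =
      delta k C 𝒞 (1 + a) q (sliceR φ w') -
        LinearMap.lTensor C ((sliceR φ).comp (delta k C 𝒞 q r)) w := by
    rw [map_sub, ← LinearMap.comp_apply, rTensor_proj_delta]
    congr 1
    rw [← LinearMap.comp_apply, LinearMap.rTensor_comp_lTensor, ← LinearMap.lTensor_comp_rTensor,
      LinearMap.comp_apply, (of_map_proj_eq hw).1]
  rw [← hfix]
  apply rTensor_proj_eq_zero D hs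
  rw [map_sub, sub_eq_zero]
  apply (TensorProduct.assoc k C C C).injective
  rw [delta_coassoc_apply D, assoc_rTensor_lTensor, hwy, ← sliceR_rTensor, ← lTensor_sliceR_assoc]
  erw [hwy']
  simp only [← LinearMap.comp_apply, ← LinearMap.lTensor_comp]
  rw [delta_slice D]

/-! ### The cocycle and the vanishing of `Ext^{2,m}` -/

lemma sum_antidiagonal_assoc {A : Type} [AddCommMonoid A] (m : ℕ) (f : ℕ → ℕ → ℕ → A) :
    ∑ a ∈ Finset.HasAntidiagonal.antidiagonal m,
      ∑ b ∈ Finset.HasAntidiagonal.antidiagonal a.1, f b.1 b.2 a.2 =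
    ∑ a ∈ Finset.HasAntidiagonal.antidiagonal m,
      ∑ b ∈ Finset.HasAntidiagonal.antidiagonal a.2, f a.1 b.1 b.2 := by
  rw [Finset.sum_sigma', Finset.sum_sigma']
  refine Finset.sum_nbij' (fun x => ⟨(x.2.1, x.2.2 + x.1.2), (x.2.2, x.1.2)⟩)
    (fun x => ⟨(x.1.1 + x.2.1, x.2.2), (x.1.1, x.2.1)⟩) ?_ ?_ ?_ ?_ ?_
  · rintro ⟨⟨a, b⟩, ⟨c, d⟩⟩ h; simp at h ⊢; omega
  · rintro ⟨⟨a, b⟩, ⟨c, d⟩⟩ h; simp at h ⊢; omega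
  · rintro ⟨⟨a, b⟩, ⟨c, d⟩⟩ h; simp at h ⊢; omega
  · rintro ⟨⟨a, b⟩, ⟨c, d⟩⟩ h; simp at h ⊢; omega
  · rintro ⟨⟨a, b⟩, ⟨c, d⟩⟩ h; simp

lemma rTensor_deltaPlus (D : GradedCoalgebraData k C 𝒞) {p q : ℕ} (hp : 1 ≤ p) {t : C ⊗[k] C}
    (h : TensorProduct.map (proj k C 𝒞 p) (proj k C 𝒞 q) t = t) :
    LinearMap.rTensor C (deltaPlus k C D.g) t =
      ∑ a ∈ Finset.HasAntidiagonal.antidiagonal p,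
        LinearMap.rTensor C (deltaPos (𝒞 := 𝒞) (k := k) a.1 a.2) t := by
  have h0 : (deltaPlus k C D.g).comp (proj k C 𝒞 p) =
      (∑ a ∈ Finset.HasAntidiagonal.antidiagonal p,
        deltaPos (𝒞 := 𝒞) (k := k) a.1 a.2).comp (proj k C 𝒞 p) := by
    ext x
    simp [deltaPlus_eq_sum D hp (proj_mem k C 𝒞 p x)]
  rw [← (of_map_proj_eq h).1, ← LinearMap.rTensor_comp_apply, h0, LinearMap.rTensor_comp_apply,
    ← LinearMap.sum_apply]
  congr 1
  exact map_sum (LinearMap.rTensorHom C) _ _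

lemma lTensor_deltaPlus (D : GradedCoalgebraData k C 𝒞) {p q : ℕ} (hq : 1 ≤ q) {t : C ⊗[k] C}
    (h : TensorProduct.map (proj k C 𝒞 p) (proj k C 𝒞 q) t = t) :
    LinearMap.lTensor C (deltaPlus k C D.g) t =
      ∑ a ∈ Finset.HasAntidiagonal.antidiagonal q,
        LinearMap.lTensor C (deltaPos (𝒞 := 𝒞) (k := k) a.1 a.2) t := by
  have h0 : (deltaPlus k C D.g).comp (proj k C 𝒞 q) =
      (∑ a ∈ Finset.HasAntidiagonal.antidiagonal q,
        deltaPos (𝒞 := 𝒞) (k := k) a.1 a.2).comp (proj k C 𝒞 q) := by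
    ext x
    simp [deltaPlus_eq_sum D hq (proj_mem k C 𝒞 q x)]
  rw [← (of_map_proj_eq h).2, ← LinearMap.lTensor_comp_apply, h0, LinearMap.lTensor_comp_apply,
    ← LinearMap.sum_apply]
  congr 1
  exact map_sum (LinearMap.lTensorHom C) _ _

/-- A tensor fixed by `π_p ⊗ π_q` lies in `C_p ⊗ C_q`. The right factor is an arbitrary subspace
equal to `C_q`, so that the lemma applies to `omega` without transport. -/
lemma mem_range_of_map_proj_eq {p q : ℕ} {t : C ⊗[k] C}
    (h : TensorProduct.map (proj k C 𝒞 p) (proj k C 𝒞 q) t = t) (S : Submodule k C)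
    (hS : S = 𝒞 q) : t ∈ LinearMap.range (TensorProduct.map (𝒞 p).subtype S.subtype) := by
  subst hS
  rw [← h]
  clear h
  induction t with
  | zero => simp
  | add a b ha hb => rw [map_add]; exact Submodule.add_mem _ ha hb
  | tmul a b =>
    exact ⟨(⟨_, proj_mem k C 𝒞 p a⟩ : 𝒞 p) ⊗ₜ (⟨_, proj_mem k C 𝒞 q b⟩ : 𝒞 q), rfl⟩

lemma mem_omega_two {p q m : ℕ} (hp : 1 ≤ p) (hq : 1 ≤ q) (hm : p + q = m) {t : C ⊗[k] C}
    (h : TensorProduct.map (proj k C 𝒞 p) (proj k C 𝒞 q) t = t) :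
    (show ↥(TP k C 2) from t) ∈ omega k 𝒞 2 m := by
  subst hm
  have hle : LinearMap.range (TensorProduct.map (𝒞 p).subtype
      (omega k 𝒞 1 (p + q - p)).subtype) ≤ omega k 𝒞 2 (p + q) := by
    rw [show omega k 𝒞 2 (p + q) = ⨆ s ∈ Finset.Icc 1 (p + q), LinearMap.range
      (TensorProduct.map (𝒞 s).subtype (omega k 𝒞 1 (p + q - s)).subtype) from rfl]
    exact le_iSup₂_of_le p (by simp; omega) le_rfl
  apply hle
  have hq' : omega k 𝒞 1 (p + q - p) = 𝒞 q := by
    rw [Nat.add_sub_cancel_left]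
    exact if_neg (by omega)
  exact mem_range_of_map_proj_eq h _ hq'

/-- Vanishing of `Ext^{2,m}`: a `2`-cocycle of degree `m` is the reduced comultiplication of an
element of `C_m`. -/
lemma exists_of_cocycle (D : GradedCoalgebraData k C 𝒞) {m : ℕ} (hm : 1 ≤ m)
    (h : Subsingleton (ExtGrp k C 𝒞 (deltaPlus k C D.g) 2 m)) (t : C ⊗[k] C)
    (ht : (show ↥(TP k C 2) from t) ∈ omega k 𝒞 2 m)
    (hd : TensorProduct.assoc k C C C (LinearMap.rTensor C (deltaPlus k C D.g) t) =
      LinearMap.lTensor C (deltaPlus k C D.g) t) :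
    ∃ x ∈ 𝒞 m, deltaPlus k C D.g x = t := by
  have hker : (show ↥(TP k C 2) from t) ∈ LinearMap.ker (cobarD k C (deltaPlus k C D.g) 2) := by
    rw [LinearMap.mem_ker]
    have h2 : cobarD k C (deltaPlus k C D.g) 2 = expand k C (deltaPlus k C D.g) 1 0 -
        expand k C (deltaPlus k C D.g) 1 1 := by
      simp [cobarD, Finset.sum_range_succ, sub_eq_add_neg]
    rw [h2]
    exact sub_eq_zero.2 hd
  let t' : ↥(LinearMap.ker (cobarD k C (deltaPlus k C D.g) 2) ⊓ omega k 𝒞 2 m) := ⟨t, hker, ht⟩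
  obtain ⟨x, hx, hxt⟩ := (Submodule.Quotient.mk_eq_zero _ (x := t')).1 (h.elim _ 0)
  refine ⟨x, ?_, ?_⟩
  · have : omega k 𝒞 1 m = 𝒞 m := if_neg (by omega)
    rw [← this]; exact hx
  · rw [cobarD] at hxt
    simp only [Finset.sum_range_succ, Finset.sum_range_zero, zero_add, pow_zero, one_smul] at hxt
    exact hxt

/-- Vanishing of `Ext^{2,m}` for `m ≥ 3` yields exactness in every degree. -/
lemma exactAt (D : GradedCoalgebraData k C 𝒞) (hs : D.Strong)
    (hE : ∀ m, 3 ≤ m → Subsingleton (ExtGrp k C 𝒞 (deltaPlus k C D.g) 2 m)) (n : ℕ) :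
    ExactAt k C 𝒞 n := by
  induction n using Nat.strong_induction_on with
  | _ n ih =>
  rcases Nat.eq_zero_or_pos n with rfl | hn
  · exact exactAt_zero D
  intro y z hy hyz
  -- `w s r` is the component of the cocycle in `C_s ⊗ C_r`, zero outside the allowed range.
  have hex : ∀ s r : ℕ, ∃ w : C ⊗[k] C,
      ((1 ≤ s ∧ 1 ≤ r ∧ s + r = n + 2) →
        TensorProduct.map (proj k C 𝒞 s) (proj k C 𝒞 r) w = w ∧
        (∀ a, 1 + a = s → TensorProduct.assoc k C C C
          (LinearMap.rTensor C (delta k C 𝒞 1 a) w) = LinearMap.lTensor C (delta k C 𝒞 a r) y) ∧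
        (s = 1 → w = y)) ∧
      (¬ (1 ≤ s ∧ 1 ≤ r ∧ s + r = n + 2) → w = 0) := by
    intro s r
    by_cases h : 1 ≤ s ∧ 1 ≤ r ∧ s + r = n + 2
    · obtain ⟨a, rfl⟩ : ∃ a, s = 1 + a := ⟨s - 1, by omega⟩
      obtain ⟨w, h1, h2, h3⟩ := exists_component D ih hy hyz a r (by omega) h.2.1
      refine ⟨w, fun _ => ⟨h1, ?_, fun h => h3 (by omega)⟩, fun h' => absurd h h'⟩
      intro a' ha'
      obtain rfl : a' = a := by omega
      exact h2
    · exact ⟨0, fun h' => absurd h' h, fun _ => rfl⟩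
  choose w hw hw0 using hex
  have hfix : ∀ s r, s + r = n + 2 →
      TensorProduct.map (proj k C 𝒞 s) (proj k C 𝒞 r) (w s r) = w s r := by
    intro s r h
    by_cases h' : 1 ≤ s ∧ 1 ≤ r
    · exact (hw s r ⟨h'.1, h'.2, h⟩).1
    · rw [hw0 s r (fun h'' => h' ⟨h''.1, h''.2.1⟩), map_zero]
  have hterm : ∀ p q r, p + q + r = n + 2 →
      TensorProduct.assoc k C C C
        (LinearMap.rTensor C (deltaPos (𝒞 := 𝒞) (k := k) p q) (w (p + q) r)) =
      LinearMap.lTensor C (deltaPos (𝒞 := 𝒞) (k := k) q r) (w p (q + r)) := by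
    intro p q r h
    by_cases hpqr : 1 ≤ p ∧ 1 ≤ q ∧ 1 ≤ r
    · obtain ⟨hp, hq, hr⟩ := hpqr
      obtain ⟨a, rfl⟩ : ∃ a, p = 1 + a := ⟨p - 1, by omega⟩
      rw [deltaPos, if_pos ⟨hp, hq⟩, deltaPos, if_pos ⟨hq, hr⟩]
      refine cocycle_component D hs (hfix _ _ (by omega))
        ((hw _ _ ⟨by omega, by omega, by omega⟩).2.1 a rfl)
        ((hw _ _ ⟨by omega, by omega, by omega⟩).2.1 (a + q) (by omega))
    · have hl : LinearMap.rTensor C (deltaPos (𝒞 := 𝒞) (k := k) p q) (w (p + q) r) = 0 := by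
        by_cases hr : 1 ≤ r
        · rw [deltaPos, if_neg (fun h' => hpqr ⟨h'.1, h'.2, hr⟩)]
          simp
        · rw [hw0 _ _ (fun h' => hr h'.2.1), map_zero]
      have hr : LinearMap.lTensor C (deltaPos (𝒞 := 𝒞) (k := k) q r) (w p (q + r)) = 0 := by
        by_cases hp : 1 ≤ p
        · rw [deltaPos, if_neg (fun h' => hpqr ⟨hp, h'.1, h'.2⟩)]
          simp
        · rw [hw0 _ _ (fun h' => hp h'.1), map_zero]
      rw [hl, hr, map_zero]
  set t : C ⊗[k] C := ∑ a ∈ Finset.HasAntidiagonal.antidiagonal (n + 2), w a.1 a.2 with ht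
  have hL : TensorProduct.assoc k C C C (LinearMap.rTensor C (deltaPlus k C D.g) t) =
      ∑ a ∈ Finset.HasAntidiagonal.antidiagonal (n + 2),
        ∑ b ∈ Finset.HasAntidiagonal.antidiagonal a.1, TensorProduct.assoc k C C C
          (LinearMap.rTensor C (deltaPos (𝒞 := 𝒞) (k := k) b.1 b.2) (w (b.1 + b.2) a.2)) := by
    rw [ht, map_sum, map_sum]
    refine Finset.sum_congr rfl fun a ha => ?_
    rw [Finset.HasAntidiagonal.mem_antidiagonal] at ha
    rw [← map_sum]
    congr 1
    rcases Nat.eq_zero_or_pos a.1 with h | h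
    · rw [hw0 a.1 a.2 (by omega), map_zero, h]
      simp [deltaPos]
    · rw [rTensor_deltaPlus D h (hfix _ _ ha)]
      refine Finset.sum_congr rfl fun b hb => ?_
      rw [Finset.HasAntidiagonal.mem_antidiagonal] at hb
      rw [hb]
  have hR : LinearMap.lTensor C (deltaPlus k C D.g) t =
      ∑ a ∈ Finset.HasAntidiagonal.antidiagonal (n + 2),
        ∑ b ∈ Finset.HasAntidiagonal.antidiagonal a.2,
          LinearMap.lTensor C (deltaPos (𝒞 := 𝒞) (k := k) b.1 b.2) (w a.1 (b.1 + b.2)) := by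
    rw [ht, map_sum]
    refine Finset.sum_congr rfl fun a ha => ?_
    rw [Finset.HasAntidiagonal.mem_antidiagonal] at ha
    rcases Nat.eq_zero_or_pos a.2 with h | h
    · rw [hw0 a.1 a.2 (by omega), map_zero, h]
      simp [deltaPos]
    · rw [lTensor_deltaPlus D h (hfix _ _ ha)]
      refine Finset.sum_congr rfl fun b hb => ?_
      rw [Finset.HasAntidiagonal.mem_antidiagonal] at hb
      rw [hb]
  obtain ⟨x, hx, hxt⟩ := exists_of_cocycle D (by omega) (hE (n + 2) (by omega)) t
    (by
      rw [ht]
      refine Submodule.sum_mem (omega k 𝒞 2 (n + 2)) fun a ha => ?_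
      rw [Finset.HasAntidiagonal.mem_antidiagonal] at ha
      by_cases h : 1 ≤ a.1 ∧ 1 ≤ a.2
      · exact mem_omega_two h.1 h.2 ha (hfix _ _ ha)
      · rw [hw0 _ _ (fun h'' => h ⟨h''.1, h''.2.1⟩)]
        exact Submodule.zero_mem _)
    (by
      rw [hL, hR, sum_antidiagonal_assoc (n + 2) (fun p q r => TensorProduct.assoc k C C C
        (LinearMap.rTensor C (deltaPos (𝒞 := 𝒞) (k := k) p q) (w (p + q) r)))]
      refine Finset.sum_congr rfl fun a ha => Finset.sum_congr rfl fun b hb => ?_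
      rw [Finset.HasAntidiagonal.mem_antidiagonal] at ha hb
      exact hterm _ _ _ (by omega))
  refine ⟨x, ?_⟩
  -- Compare the components of bidegree `(1, n + 1)` in `Δ₊ x = t`.
  have hcomp := congrArg (TensorProduct.map (proj k C 𝒞 1) (proj k C 𝒞 (n + 1))) hxt
  have hlhs : TensorProduct.map (proj k C 𝒞 1) (proj k C 𝒞 (n + 1)) (deltaPlus k C D.g x) =
      delta k C 𝒞 1 (n + 1) x := by
    simp [deltaPlus, delta, proj_ne k C 𝒞 (g_mem D)]
  have hrhs : TensorProduct.map (proj k C 𝒞 1) (proj k C 𝒞 (n + 1)) t = y := by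
    rw [ht, map_sum, Finset.sum_eq_single (1, n + 1)]
    · rw [hfix _ _ (by omega)]
      exact (hw 1 (n + 1) ⟨by omega, by omega, by omega⟩).2.2 rfl
    · rintro ⟨a, b⟩ hab hne
      rw [Finset.HasAntidiagonal.mem_antidiagonal] at hab
      have ha : a ≠ 1 := by
        rintro rfl
        exact hne (by simp at hab ⊢; omega)
      rw [← hfix a b hab, ← LinearMap.comp_apply, ← TensorProduct.map_comp]
      have : (proj k C 𝒞 1).comp (proj k C 𝒞 a) = 0 :=
        LinearMap.ext fun v => proj_ne k C 𝒞 (proj_mem k C 𝒞 a v) ha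
      rw [this, TensorProduct.map_zero_left, LinearMap.zero_apply]
    · intro h
      exact absurd (by simp; omega) h
  rw [← hlhs, hcomp, hrhs]

/-! ### Iterated comultiplication and quadratic relations -/

variable (C 𝒞) in
/-- The restriction of `Δ_{p,q}` to `C_s`, with `s = p + q` in the case of interest. -/
abbrev dres (D : GradedCoalgebraData k C 𝒞) (p q s : ℕ) : ↥(𝒞 s) →ₗ[k] ↥(𝒞 p) ⊗[k] ↥(𝒞 q) :=
  (D.Δc p q).comp (𝒞 s).subtype

lemma incl_injective (p q : ℕ) :
    Function.Injective (TensorProduct.map (𝒞 p).subtype (𝒞 q).subtype) :=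
  TensorProduct.map_injective_of_flat_flat _ _ (𝒞 p).subtype_injective (𝒞 q).subtype_injective

lemma incl_lTensor (D : GradedCoalgebraData k C 𝒞) (p q r s : ℕ) (t : ↥(𝒞 p) ⊗[k] ↥(𝒞 s)) :
    TensorProduct.map (𝒞 p).subtype (TensorProduct.map (𝒞 q).subtype (𝒞 r).subtype)
      (LinearMap.lTensor _ (dres C 𝒞 D q r s) t) =
    LinearMap.lTensor C (delta k C 𝒞 q r)
      (TensorProduct.map (𝒞 p).subtype (𝒞 s).subtype t) := by
  rw [delta_eq D, ← LinearMap.comp_apply, ← LinearMap.comp_apply, LinearMap.map_comp_lTensor,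
    LinearMap.lTensor_comp_map, LinearMap.comp_assoc]

lemma incl_rTensor (D : GradedCoalgebraData k C 𝒞) (p q r s : ℕ) (t : ↥(𝒞 s) ⊗[k] ↥(𝒞 r)) :
    TensorProduct.map (𝒞 p).subtype (TensorProduct.map (𝒞 q).subtype (𝒞 r).subtype)
      (TensorProduct.assoc k _ _ _ (LinearMap.rTensor _ (dres C 𝒞 D p q s) t)) =
    TensorProduct.assoc k C C C (LinearMap.rTensor C (delta k C 𝒞 p q)
      (TensorProduct.map (𝒞 s).subtype (𝒞 r).subtype t)) := by
  have h : ∀ u, TensorProduct.map (𝒞 p).subtype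
      (TensorProduct.map (𝒞 q).subtype (𝒞 r).subtype) (TensorProduct.assoc k _ _ _ u) =
      TensorProduct.assoc k C C C (TensorProduct.map
        (TensorProduct.map (𝒞 p).subtype (𝒞 q).subtype) (𝒞 r).subtype u) :=
    fun u => LinearMap.congr_fun
      (TensorProduct.map_map_comp_assoc_eq (𝒞 p).subtype (𝒞 q).subtype (𝒞 r).subtype) u
  rw [h, delta_eq D, ← LinearMap.comp_apply, ← LinearMap.comp_apply (LinearMap.rTensor C _),
    LinearMap.map_comp_rTensor, LinearMap.rTensor_comp_map, LinearMap.comp_assoc]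

/-- Coassociativity between the homogeneous components themselves. -/
lemma dres_coassoc (D : GradedCoalgebraData k C 𝒞) (p q r s s' : ℕ) (hs : s = p + q)
    (hs' : s' = q + r) (x : C) :
    LinearMap.lTensor _ (dres C 𝒞 D q r s') (D.Δc p s' x) =
      TensorProduct.assoc k _ _ _ (LinearMap.rTensor _ (dres C 𝒞 D p q s) (D.Δc s r x)) := by
  subst hs hs'
  apply TensorProduct.map_injective_of_flat_flat _ _ (𝒞 p).subtype_injective
    (incl_injective (𝒞 := 𝒞) (k := k) q r)
  have e : ∀ a b, TensorProduct.map (𝒞 a).subtype (𝒞 b).subtype (D.Δc a b x) =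
      delta k C 𝒞 a b x := fun a b => by rw [delta_eq D]; rfl
  rw [incl_lTensor, incl_rTensor, e, e, delta_coassoc_apply D]

/-- The restriction of `Δ(m)` to `C_m`. -/
abbrev iterRes (D : GradedCoalgebraData k C 𝒞) (m : ℕ) : ↥(𝒞 m) →ₗ[k] ↥(TP k ↥(𝒞 1) m) :=
  (deltaIter k C 𝒞 D m).comp (𝒞 m).subtype

lemma iterRes_one (D : GradedCoalgebraData k C 𝒞) (x : ↥(𝒞 1)) : iterRes D 1 x = x := by
  show DirectSum.decompose 𝒞 (x : C) 1 = x
  exact Subtype.ext (DirectSum.decompose_of_mem_same _ x.2)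

lemma deltaIter_succ (D : GradedCoalgebraData k C 𝒞) (n : ℕ) (x : C) :
    deltaIter k C 𝒞 D (n + 2) x =
      LinearMap.lTensor ↥(𝒞 1) (iterRes D (n + 1)) (D.Δc 1 (n + 1) x) := rfl

lemma iterRes_injective (D : GradedCoalgebraData k C 𝒞) (hs : D.Strong) (n : ℕ) :
    Function.Injective (iterRes D (n + 1)) := by
  induction n with
  | zero =>
    intro x y h
    rw [iterRes_one, iterRes_one] at h
    exact h
  | succ n ih =>
    rw [injective_iff_map_eq_zero]
    intro x hx
    have h1 : LinearMap.lTensor ↥(𝒞 1) (iterRes D (n + 1)) (D.Δc 1 (n + 1) x) = 0 := hx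
    have h2 := (injective_iff_map_eq_zero _).1
      (Module.Flat.lTensor_preserves_injective_linearMap (M := ↥(𝒞 1)) _ ih) _ h1
    have hx2 : (x : C) ∈ 𝒞 (1 + (n + 1)) := by
      rw [show 1 + (n + 1) = n + 1 + 1 by omega]; exact x.2
    exact Subtype.ext (hs 1 (n + 1) x hx2 h2)

/-- The space of quadratic relations, the image of `Δ_{1,1}`. -/
abbrev rel (D : GradedCoalgebraData k C 𝒞) : Submodule k (↥(𝒞 1) ⊗[k] ↥(𝒞 1)) :=
  Submodule.map (D.Δc 1 1) (𝒞 2)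

/-- Since `Δ(j+2) = (id ⊗ Δ(j+1)) ∘ Δ_{1,j+1}`, a tensor `u` representing `(id ⊗ Δ_{1,j+1}) t`
up to the associator determines `(id ⊗ Δ(j+2)) t`. -/
lemma deltaIter_eq_assoc (D : GradedCoalgebraData k C 𝒞) (j : ℕ) (t : ↥(𝒞 1) ⊗[k] ↥(𝒞 (j + 2)))
    (u : (↥(𝒞 1) ⊗[k] ↥(𝒞 1)) ⊗[k] ↥(𝒞 (j + 1)))
    (h : LinearMap.lTensor _ (dres C 𝒞 D 1 (j + 1) (j + 2)) t = TensorProduct.assoc k _ _ _ u) :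
    LinearMap.lTensor ↥(𝒞 1) (iterRes D (j + 2)) t =
      TensorProduct.assoc k ↥(𝒞 1) ↥(𝒞 1) ↥(TP k ↥(𝒞 1) (j + 1))
        (LinearMap.lTensor _ (iterRes D (j + 1)) u) := by
  have h1 : LinearMap.lTensor ↥(𝒞 1) (iterRes D (j + 2)) t =
      LinearMap.lTensor ↥(𝒞 1) (LinearMap.lTensor ↥(𝒞 1) (iterRes D (j + 1)))
        (LinearMap.lTensor _ (dres C 𝒞 D 1 (j + 1) (j + 2)) t) := by
    rw [← LinearMap.lTensor_comp_apply]
    rfl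
  rw [h1, h]
  have h2 : (LinearMap.lTensor ↥(𝒞 1) (LinearMap.lTensor ↥(𝒞 1) (iterRes D (j + 1)))).comp
      (TensorProduct.assoc k _ _ _).toLinearMap =
      (TensorProduct.assoc k ↥(𝒞 1) ↥(𝒞 1) ↥(TP k ↥(𝒞 1) (j + 1))).toLinearMap.comp
        (LinearMap.lTensor _ (iterRes D (j + 1))) := by
    ext a b c; simp
  exact LinearMap.congr_fun h2 u

/-- The image of `Δ(j+2)` satisfies the quadratic relation at each position `i`: at `i = 0` by
coassociativity, and at later positions by induction, since the first tensor factor then plays no role. -/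
lemma deltaIter_mem_insertK (D : GradedCoalgebraData k C 𝒞) (j : ℕ) :
    ∀ i ≤ j, ∀ x ∈ 𝒞 (j + 2), deltaIter k C 𝒞 D (j + 2) x ∈ insertK k (rel D) j i := by
  induction j with
  | zero =>
    intro i hi x hx
    obtain rfl : i = 0 := by omega
    refine ⟨x, hx, ?_⟩
    rw [deltaIter_succ]
    have : iterRes D (0 + 1) = LinearMap.id := LinearMap.ext (iterRes_one D)
    rw [this]
    exact (LinearMap.lTensor_id_apply _ _ _).symm
  | succ j ih =>
    intro i hi x hx
    rcases i with _ | i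
    · have hco := dres_coassoc D 1 1 (j + 1) 2 (j + 2) rfl (by omega) x
      have h := deltaIter_eq_assoc D j _ _ hco
      refine ⟨_, ?_, h.symm⟩
      let f : ↥(𝒞 2) →ₗ[k] ↥(rel D) := (dres C 𝒞 D 1 1 2).codRestrict _
        (fun v => ⟨v, v.2, rfl⟩)
      refine ⟨TensorProduct.map f (iterRes D (j + 1)) (D.Δc 2 (j + 1) x), ?_⟩
      exact (LinearMap.congr_fun (TensorProduct.map_comp (rel D).subtype LinearMap.id f
        (iterRes D (j + 1))) _).symm.trans (LinearMap.congr_fun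
          (LinearMap.lTensor_comp_rTensor _ (dres C 𝒞 D 1 1 2) (iterRes D (j + 1))) _).symm
    · let f : ↥(𝒞 (j + 2)) →ₗ[k] ↥(insertK k (rel D) j i) := (iterRes D (j + 2)).codRestrict _
        (fun v => ih i (by omega) v v.2)
      refine ⟨TensorProduct.map LinearMap.id f (D.Δc 1 (j + 2) x), ?_⟩
      exact (LinearMap.lTensor_comp_apply _ (insertK k (rel D) j i).subtype f _).symm

/-- Exactness, restated between the homogeneous components. -/
lemma exists_of_exactAt (D : GradedCoalgebraData k C 𝒞) {j : ℕ} (hE : ExactAt k C 𝒞 (j + 1))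
    (y : ↥(𝒞 1) ⊗[k] ↥(𝒞 (j + 2))) (z : ↥(𝒞 2) ⊗[k] ↥(𝒞 (j + 1)))
    (h : LinearMap.lTensor _ (dres C 𝒞 D 1 (j + 1) (j + 2)) y =
      TensorProduct.assoc k _ _ _ (LinearMap.rTensor _ (dres C 𝒞 D 1 1 2) z)) :
    ∃ x ∈ 𝒞 (j + 3), D.Δc 1 (j + 2) x = y := by
  obtain ⟨x, hx⟩ := hE (TensorProduct.map (𝒞 1).subtype (𝒞 (j + 2)).subtype y)
    (TensorProduct.map (𝒞 2).subtype (𝒞 (j + 1)).subtype z)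
    (by rw [map_proj_incl, if_pos ⟨rfl, rfl⟩])
    (by rw [← incl_lTensor, h, incl_rTensor])
  refine ⟨proj k C 𝒞 (j + 3) x, proj_mem k C 𝒞 _ _, incl_injective _ _ ?_⟩
  rw [← hx, ← delta_comp_proj D, delta_eq D, show 1 + (j + 1 + 1) = j + 3 by omega]
  rfl

/-- The relations at positions `i ≥ 1` put `t ∈ C̃_m` into `(id ⊗ Δ(m-1))(C₁ ⊗ C_{m-1})` by
induction, and the relation at `i = 0` is then the hypothesis of exactness; here `m = j + 2`. -/
lemma ctilde_le (D : GradedCoalgebraData k C 𝒞) (hs : D.Strong)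
    (hE : ∀ n, ExactAt k C 𝒞 n) (j : ℕ) :
    Ctilde k C 𝒞 D j ≤ Submodule.map (deltaIter k C 𝒞 D (j + 2)) (𝒞 (j + 2)) := by
  induction j with
  | zero =>
    intro t ht
    have h0 : t ∈ insertK k (rel D) 0 0 := by
      simp only [Ctilde, Submodule.mem_iInf] at ht
      exact ht 0 (by simp)
    obtain ⟨x, hx, hxt⟩ := h0
    refine ⟨x, hx, ?_⟩
    rw [deltaIter_succ]
    have : iterRes D (0 + 1) = LinearMap.id := LinearMap.ext (iterRes_one D)
    rw [this, ← hxt]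
    exact LinearMap.lTensor_id_apply _ _ _
  | succ j ih =>
    intro t ht
    have hmem : ∀ i ≤ j + 1, t ∈ insertK k (rel D) (j + 1) i := by
      intro i hi
      simp only [Ctilde, Submodule.mem_iInf] at ht
      exact ht i (by simp; omega)
    obtain ⟨y, hy⟩ : ∃ y, LinearMap.lTensor ↥(𝒞 1) (iterRes D (j + 2)) y = t := by
      refine mem_range_lTensor_of_slice (iterRes D (j + 2)) t fun φ => ?_
      have hsl : sliceL φ t ∈ Ctilde k C 𝒞 D j := by
        simp only [Ctilde, Submodule.mem_iInf]
        intro i hi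
        obtain ⟨v, hv⟩ := hmem (i + 1) (by simp at hi; omega)
        have hv' : LinearMap.lTensor ↥(𝒞 1) (insertK k (rel D) j i).subtype v = t := hv
        rw [← hv', sliceL_lTensor]
        exact Subtype.coe_prop _
      obtain ⟨x, hx, hxt⟩ := ih hsl
      exact ⟨⟨x, hx⟩, hxt⟩
    obtain ⟨u, hu⟩ := (TensorProduct.assoc k ↥(𝒞 1) ↥(𝒞 1) ↥(𝒞 (j + 1))).surjective
      (LinearMap.lTensor _ (dres C 𝒞 D 1 (j + 1) (j + 2)) y)
    have hyu := deltaIter_eq_assoc D j y u hu.symm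
    obtain ⟨v, ⟨v', hv'⟩, hv⟩ := hmem 0 (by omega)
    have huv : LinearMap.lTensor _ (iterRes D (j + 1)) u = v := by
      apply (TensorProduct.assoc k ↥(𝒞 1) ↥(𝒞 1) ↥(TP k ↥(𝒞 1) (j + 1))).injective
      rw [← hyu, hy]
      exact hv.symm
    -- A retraction of `Δ(j+1)` moves the relation from `C₁^{⊗(j+1)}` back to `C_{j+1}`.
    obtain ⟨ρ, hρ⟩ := LinearMap.exists_leftInverse_of_injective (iterRes D (j + 1))
      (LinearMap.ker_eq_bot.2 (iterRes_injective D hs j))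
    have hu' : u = LinearMap.rTensor _ (rel D).subtype (LinearMap.lTensor _ ρ v') := by
      have h1 : u = LinearMap.lTensor _ ρ v := by
        rw [← huv, ← LinearMap.lTensor_comp_apply, hρ, LinearMap.lTensor_id_apply]
      rw [h1, ← hv', ← LinearMap.comp_apply, ← LinearMap.comp_apply, LinearMap.lTensor_comp_map,
        LinearMap.rTensor_comp_lTensor, LinearMap.comp_id]
    let f : ↥(𝒞 2) →ₗ[k] ↥(rel D) := (dres C 𝒞 D 1 1 2).codRestrict _ (fun v => ⟨v, v.2, rfl⟩)
    have hf : Function.Surjective f := by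
      rintro ⟨_, a, ha, rfl⟩
      exact ⟨⟨a, ha⟩, rfl⟩
    obtain ⟨z, hz⟩ := LinearMap.rTensor_surjective ↥(𝒞 (j + 1)) hf (LinearMap.lTensor _ ρ v')
    obtain ⟨x, hx, hxy⟩ := exists_of_exactAt D (hE (j + 1)) y z (by
      rw [← hu, hu', ← hz, ← LinearMap.rTensor_comp_apply]
      rfl)
    refine ⟨x, hx, ?_⟩
    rw [deltaIter_succ, hxy]
    exact hy

end Graded

/-- **Statement 17.** A connected strongly graded `k`-coalgebra `C` which is Koszul, i.e.
with `Ext_C^{n,m}(k,k) = 0` for all `n ≠ m`, is quadratic. -/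
theorem statement17 (D : GradedCoalgebraData k C 𝒞) (hstrong : D.Strong)
    (hkoszul : ∀ n m : ℕ, 1 ≤ n → 1 ≤ m → n ≠ m →
      Subsingleton (ExtGrp k C 𝒞 (deltaPlus k C D.g) n m)) :
    CoalgQuadratic k C 𝒞 D := by
  have hE : ∀ n, ExactAt k C 𝒞 n :=
    exactAt D hstrong fun m hm => hkoszul 2 m (by omega) (by omega) (by omega)
  intro j
  refine ⟨fun x hx h => ?_, le_antisymm ?_ (ctilde_le D hstrong hE j)⟩
  · exact congrArg Subtype.val ((injective_iff_map_eq_zero (iterRes D (j + 2))).1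
      (iterRes_injective D hstrong (j + 1)) ⟨x, hx⟩ h)
  · rintro _ ⟨x, hx, rfl⟩
    simp only [Ctilde, Submodule.mem_iInf]
    intro i hi
    exact deltaIter_mem_insertK D j i (by simp at hi; omega) x hx

end Koszul
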